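/- (Angle-reciprocity) Let λ > 0 and D > 0 be real numbers, and let θ₁, θ₂, θ₃, ΔΦ₁, ΔΦ₂ be real numbers with θ₁, θ₃ ∈ [−π/2, π/2]. Suppose there is an integer k such that −(2πD/λ) sin θ₂ = ΔΦ₁ + (2πD/λ) sin θ₁ + 2kπ and −(2πD/λ) sin θ₃ = ΔΦ₂ + (2πD/λ) sin θ₂ + 2kπ, and suppose ΔΦ₁ = ΔΦ₂. Then θ₃ = θ₁; that is, the reverse-incident wave from θ₂ is reflected back exactly along the forward incidence direction θ₁. -/

import Mathlib

open Real

/-- The beam-deflection law: an RIS sends a wave incident from angle `θ` to angle `θ'` in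
diffraction order `k`. Here `κ` is the paper's `2πD/λ` and `φ` the phase difference `ΔΦ` of
adjacent unit cells; the order is a parameter, so that two paths can be compared at equal order. -/
def DeflectsTo (κ φ : ℝ) (k : ℤ) (θ θ' : ℝ) : Prop :=
  -κ * sin θ' = φ + κ * sin θ + 2 * (k : ℝ) * π

namespace DeflectsTo

variable {κ φ θ θ' θ'' : ℝ} {k : ℤ}

theorem symm (h : DeflectsTo κ φ k θ θ') : DeflectsTo κ φ k θ' θ := by
  unfold DeflectsTo at h ⊢
  linarith

theorem right_unique (hκ : κ ≠ 0) (h' : DeflectsTo κ φ k θ θ') (h'' : DeflectsTo κ φ k θ θ'')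
    (hθ' : θ' ∈ Set.Icc (-(π / 2)) (π / 2)) (hθ'' : θ'' ∈ Set.Icc (-(π / 2)) (π / 2)) :
    θ' = θ'' := by
  have hmul : -κ * sin θ' = -κ * sin θ'' := Eq.trans h' (Eq.symm h'')
  have hsin : sin θ' = sin θ'' := mul_left_cancel₀ (neg_ne_zero.mpr hκ) hmul
  exact injOn_sin hθ' hθ'' hsin

end DeflectsTo

/-- Angle-reciprocity: if ΔΦ₁ = ΔΦ₂ (same integer k in both beam-deflection
equations) and θ₁, θ₃ ∈ [−π/2, π/2], then the reverse wave from θ₂ is reflected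
back exactly along θ₁, i.e. θ₃ = θ₁. -/
theorem ris_angle_reciprocity
    (lam D : ℝ) (hlam : 0 < lam) (hD : 0 < D)
    (θ₁ θ₂ θ₃ ΔΦ₁ ΔΦ₂ : ℝ)
    (hθ₁ : θ₁ ∈ Set.Icc (-(Real.pi / 2)) (Real.pi / 2))
    (hθ₃ : θ₃ ∈ Set.Icc (-(Real.pi / 2)) (Real.pi / 2))
    (k : ℤ)
    (h1 : -(2 * Real.pi * D / lam) * Real.sin θ₂ =
        ΔΦ₁ + (2 * Real.pi * D / lam) * Real.sin θ₁ + 2 * (k : ℝ) * Real.pi)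
    (h2 : -(2 * Real.pi * D / lam) * Real.sin θ₃ =
        ΔΦ₂ + (2 * Real.pi * D / lam) * Real.sin θ₂ + 2 * (k : ℝ) * Real.pi)
    (hΔΦ : ΔΦ₁ = ΔΦ₂) :
    θ₃ = θ₁ := by
  have hκ : 2 * π * D / lam ≠ 0 := by positivity
  have forward : DeflectsTo (2 * π * D / lam) ΔΦ₁ k θ₁ θ₂ := h1
  have reverse : DeflectsTo (2 * π * D / lam) ΔΦ₁ k θ₂ θ₃ := hΔΦ ▸ h2
  exact reverse.right_unique hκ forward.symm hθ₃ hθ₁
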